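/- Let Ω be a probability space with probability measure μ, let S, S*, T, U, and V be finite types equipped with measurable structures in which all singletons are measurable, let G : Ω → S, G* : Ω → S*, and Y : Ω → T be measurable random variables, let t : S → U be a measurable function (a data augmentation), and let f* : S → V and f*' : S* → V be injective measurable functions (the optimal encoder applied to the graph and to the anchor view, respectively). Suppose that I[f*' ∘ G* ; Y] = I[f* ∘ G ; Y] (the encoded anchor view carries the same label-relevant information as the encoded input graph). Then I[G* ; Y] ≥ I[t ∘ G ; Y]. -/

import Mathlib

open MeasureTheory Finset

/-- Shannon entropy of a finite-valued random variable:
`H[X] = -∑ x, P(X = x) * log P(X = x)`. -/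
noncomputable def shannonEntropy {Ω : Type*} [MeasurableSpace Ω] (μ : Measure Ω)
    {S : Type*} [Fintype S] (X : Ω → S) : ℝ :=
  -∑ x : S, (μ (X ⁻¹' {x})).toReal * Real.log (μ (X ⁻¹' {x})).toReal

/-- Conditional Shannon entropy
`H[Y | X] = -∑ x, ∑ y, P(Y = y, X = x) * log (P(Y = y | X = x))`,
where `P(Y = y | X = x) = P(Y = y, X = x) / P(X = x)`. -/
noncomputable def condShannonEntropy {Ω : Type*} [MeasurableSpace Ω] (μ : Measure Ω)
    {S T : Type*} [Fintype S] [Fintype T] (Y : Ω → T) (X : Ω → S) : ℝ :=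
  -∑ x : S, ∑ y : T, (μ (Y ⁻¹' {y} ∩ X ⁻¹' {x})).toReal *
    Real.log ((μ (Y ⁻¹' {y} ∩ X ⁻¹' {x})).toReal / (μ (X ⁻¹' {x})).toReal)

/-- Mutual information `I[X ; Y] = H[X] + H[Y] - H[⟨X, Y⟩]`. -/
noncomputable def mutualInfo {Ω : Type*} [MeasurableSpace Ω] (μ : Measure Ω)
    {S T : Type*} [Fintype S] [Fintype T] (X : Ω → S) (Y : Ω → T) : ℝ :=
  shannonEntropy μ X + shannonEntropy μ Y - shannonEntropy μ (fun ω => (X ω, Y ω))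

/-!
Strong subadditivity `H[X, Y, Z] + H[Z] ≤ H[X, Z] + H[Y, Z]` is Gibbs' inequality between the law of
`(X, Y, Z)` and the weights `P(x, z) P(y, z) / P(z)` that would make `X` and `Y` conditionally
independent given `Z`. If `Z` is a function of `X`, it is the data processing inequality
`I[Z ; Y] ≤ I[X ; Y]`. An injective encoder of `G` loses nothing, so `t ∘ G` is a function of
`f* ∘ G`, and `I[t ∘ G ; Y] ≤ I[f* ∘ G ; Y] = I[f*' ∘ G* ; Y] ≤ I[G* ; Y]`.
-/

theorem sum_mul_log_le_sum_mul_log {ι : Type*} {s : Finset ι} {p q : ι → ℝ}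
    (hp : ∀ i ∈ s, 0 ≤ p i) (hq : ∀ i ∈ s, 0 ≤ q i) (hpq : ∀ i ∈ s, q i = 0 → p i = 0)
    (hsum : ∑ i ∈ s, q i ≤ ∑ i ∈ s, p i) :
    ∑ i ∈ s, p i * Real.log (q i) ≤ ∑ i ∈ s, p i * Real.log (p i) := by
  have tangent_le : ∀ i ∈ s, p i * Real.log (q i) - p i * Real.log (p i) ≤ q i - p i := by
    intro i hi
    rcases (hp i hi).eq_or_lt' with hpi | hpi
    · simpa [hpi] using hq i hi
    · have hqi : 0 < q i := (hq i hi).lt_of_ne' fun h => hpi.ne' (hpq i hi h)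
      calc p i * Real.log (q i) - p i * Real.log (p i)
          = p i * Real.log (q i / p i) := by rw [Real.log_div hqi.ne' hpi.ne', mul_sub]
        _ ≤ p i * (q i / p i - 1) := by
          gcongr
          exact Real.log_le_sub_one_of_pos (div_pos hqi hpi)
        _ = q i - p i := by field_simp
  have := Finset.sum_le_sum tangent_le
  rw [Finset.sum_sub_distrib, Finset.sum_sub_distrib] at this
  linarith

theorem sum_mul_log_add_sum_mul_log_le {ι : Type*} {s : Finset ι} {p a b c : ι → ℝ}
    (hp : ∀ i ∈ s, 0 ≤ p i) (hpa : ∀ i ∈ s, p i ≤ a i) (hpb : ∀ i ∈ s, p i ≤ b i)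
    (hpc : ∀ i ∈ s, p i ≤ c i) (hsum : ∑ i ∈ s, a i * b i / c i ≤ ∑ i ∈ s, p i) :
    ∑ i ∈ s, p i * Real.log (a i) + ∑ i ∈ s, p i * Real.log (b i) ≤
      ∑ i ∈ s, p i * Real.log (p i) + ∑ i ∈ s, p i * Real.log (c i) := by
  have weight_nonneg : ∀ i ∈ s, 0 ≤ a i * b i / c i := fun i hi =>
    have h := hp i hi
    div_nonneg (mul_nonneg (h.trans (hpa i hi)) (h.trans (hpb i hi))) (h.trans (hpc i hi))
  have eq_zero_of_weight_eq_zero : ∀ i ∈ s, a i * b i / c i = 0 → p i = 0 := by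
    intro i hi h
    refine (hp i hi).antisymm' ?_
    rcases div_eq_zero_iff.1 h with hab | hc
    · rcases mul_eq_zero.1 hab with ha | hb
      · exact (hpa i hi).trans_eq ha
      · exact (hpb i hi).trans_eq hb
    · exact (hpc i hi).trans_eq hc
  have log_weight : ∀ i ∈ s, p i * Real.log (a i * b i / c i) =
      p i * Real.log (a i) + p i * Real.log (b i) - p i * Real.log (c i) := by
    intro i hi
    rcases (hp i hi).eq_or_lt' with hpi | hpi
    · simp only [hpi, zero_mul, add_zero, sub_zero]
    · have ha : a i ≠ 0 := (hpi.trans_le (hpa i hi)).ne'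
      have hb : b i ≠ 0 := (hpi.trans_le (hpb i hi)).ne'
      have hc : c i ≠ 0 := (hpi.trans_le (hpc i hi)).ne'
      rw [Real.log_div (mul_ne_zero ha hb) hc, Real.log_mul ha hb]
      ring
  have gibbs := sum_mul_log_le_sum_mul_log hp weight_nonneg eq_zero_of_weight_eq_zero hsum
  rw [Finset.sum_congr rfl log_weight, Finset.sum_sub_distrib, Finset.sum_add_distrib] at gibbs
  linarith

theorem measurable_of_factorsThrough {Ω S U : Type*} [MeasurableSpace Ω] [Countable S]
    [MeasurableSpace S] [MeasurableSingletonClass S] [MeasurableSpace U] {X : Ω → S} {Z : Ω → U}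
    (hX : Measurable X) (h : Z.FactorsThrough X) : Measurable Z := by
  intro A _
  have preimage_eq : Z ⁻¹' A = X ⁻¹' (X '' (Z ⁻¹' A)) := by
    refine (Set.subset_preimage_image X _).antisymm ?_
    rintro ω ⟨ω', hω', hX'⟩
    rwa [Set.mem_preimage, ← h hX']
  rw [preimage_eq]
  exact hX (Set.to_countable _).measurableSet

section FiniteValued

variable {Ω : Type*} [MeasurableSpace Ω] {μ : Measure Ω} [IsFiniteMeasure μ]
  {S T U : Type*} [Fintype S] [MeasurableSpace S] [MeasurableSingletonClass S]
  {X : Ω → S} {Y : Ω → T} {Z : Ω → U}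

theorem integral_comp_eq_sum_preimage_singleton (hX : Measurable X) (g : S → ℝ) :
    ∫ ω, g (X ω) ∂μ = ∑ x, μ.real (X ⁻¹' {x}) * g x := by
  rw [← integral_map hX.aemeasurable (measurable_of_finite g).aestronglyMeasurable,
    integral_fintype .of_finite]
  simp only [map_measureReal_apply hX (measurableSet_singleton _), smul_eq_mul]

theorem sum_measureReal_preimage_singleton_eq_univ (hX : Measurable X) :
    ∑ x, μ.real (X ⁻¹' {x}) = μ.real Set.univ := by
  simpa using sum_measureReal_preimage_singleton (μ := μ) Finset.univ
    fun x _ => hX (measurableSet_singleton x)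

theorem sum_measureReal_preimage_prodMk_singleton (hX : Measurable X) (Z : Ω → U) (z : U) :
    ∑ x, μ.real ((fun ω => (X ω, Z ω)) ⁻¹' {(x, z)}) = μ.real (Z ⁻¹' {z}) := by
  have fiber_eq : ∀ x, (fun ω => (X ω, Z ω)) ⁻¹' {(x, z)} = X ⁻¹' {x} ∩ Z ⁻¹' {z} := fun x => by
    ext ω
    simp only [Set.mem_preimage, Set.mem_singleton_iff, Prod.mk.injEq, Set.mem_inter_iff]
  simp only [fiber_eq, ← measureReal_restrict_apply (hX (measurableSet_singleton _)),
    sum_measureReal_preimage_singleton_eq_univ hX, measureReal_restrict_apply_univ]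

theorem shannonEntropy_eq_neg_integral (hX : Measurable X) :
    shannonEntropy μ X = -∫ ω, Real.log (μ.real (X ⁻¹' {X ω})) ∂μ := by
  rw [integral_comp_eq_sum_preimage_singleton hX fun x => Real.log (μ.real (X ⁻¹' {x}))]
  rfl

theorem shannonEntropy_comp (hX : Measurable X) [Fintype U] (φ : S → U) :
    shannonEntropy μ (φ ∘ X) =
      -∑ x, μ.real (X ⁻¹' {x}) * Real.log (μ.real ((φ ∘ X) ⁻¹' {φ x})) := by
  let _ : MeasurableSpace U := ⊤
  rw [shannonEntropy_eq_neg_integral ((measurable_of_finite φ).comp hX)]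
  exact congrArg _ (integral_comp_eq_sum_preimage_singleton hX
    fun x => Real.log (μ.real ((φ ∘ X) ⁻¹' {φ x})))

variable [Fintype T] [MeasurableSpace T] [MeasurableSingletonClass T]
  [Fintype U] [MeasurableSpace U] [MeasurableSingletonClass U]

theorem shannonEntropy_congr (hX : Measurable X) (hZ : Measurable Z)
    (h : ∀ ω ω', X ω = X ω' ↔ Z ω = Z ω') : shannonEntropy μ X = shannonEntropy μ Z := by
  have fiber_eq : ∀ ω, X ⁻¹' {X ω} = Z ⁻¹' {Z ω} := fun ω => Set.ext fun ω' => h ω' ω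
  simp only [shannonEntropy_eq_neg_integral hX, shannonEntropy_eq_neg_integral hZ, fiber_eq]

theorem sum_measureReal_mul_div_eq_univ (hX : Measurable X) (hY : Measurable Y)
    (hZ : Measurable Z) :
    ∑ w : S × T × U, μ.real ((fun ω => (X ω, Z ω)) ⁻¹' {(w.1, w.2.2)}) *
      μ.real ((fun ω => (Y ω, Z ω)) ⁻¹' {w.2}) / μ.real (Z ⁻¹' {w.2.2}) = μ.real Set.univ := by
  rw [Fintype.sum_prod_type_right, Fintype.sum_prod_type_right]
  simp only [← Finset.sum_div, ← Finset.sum_mul, ← Finset.mul_sum,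
    sum_measureReal_preimage_prodMk_singleton hX,
    sum_measureReal_preimage_prodMk_singleton hY, mul_self_div_self,
    sum_measureReal_preimage_singleton_eq_univ hZ]

theorem shannonEntropy_submodular (hX : Measurable X) (hY : Measurable Y) (hZ : Measurable Z) :
    shannonEntropy μ (fun ω => (X ω, Y ω, Z ω)) + shannonEntropy μ Z ≤
      shannonEntropy μ (fun ω => (X ω, Z ω)) + shannonEntropy μ (fun ω => (Y ω, Z ω)) := by
  have hXYZ : Measurable fun ω => (X ω, Y ω, Z ω) := hX.prodMk (hY.prodMk hZ)
  let p : S × T × U → ℝ := fun w => μ.real ((fun ω => (X ω, Y ω, Z ω)) ⁻¹' {w})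
  let a : S × T × U → ℝ := fun w => μ.real ((fun ω => (X ω, Z ω)) ⁻¹' {(w.1, w.2.2)})
  let b : S × T × U → ℝ := fun w => μ.real ((fun ω => (Y ω, Z ω)) ⁻¹' {w.2})
  let c : S × T × U → ℝ := fun w => μ.real (Z ⁻¹' {w.2.2})
  have entropy_XYZ : shannonEntropy μ (fun ω => (X ω, Y ω, Z ω)) = -∑ w, p w * Real.log (p w) := rfl
  have entropy_XZ : shannonEntropy μ (fun ω => (X ω, Z ω)) = -∑ w, p w * Real.log (a w) :=
    shannonEntropy_comp hXYZ fun w => (w.1, w.2.2)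
  have entropy_YZ : shannonEntropy μ (fun ω => (Y ω, Z ω)) = -∑ w, p w * Real.log (b w) :=
    shannonEntropy_comp hXYZ Prod.snd
  have entropy_Z : shannonEntropy μ Z = -∑ w, p w * Real.log (c w) :=
    shannonEntropy_comp hXYZ fun w => w.2.2
  have p_le_a : ∀ w, p w ≤ a w := fun w =>
    measureReal_mono fun ω hω => congrArg (fun w : S × T × U => (w.1, w.2.2)) hω
  have p_le_b : ∀ w, p w ≤ b w := fun w => measureReal_mono fun ω hω => congrArg Prod.snd hω
  have p_le_c : ∀ w, p w ≤ c w := fun w =>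
    measureReal_mono fun ω hω => congrArg (fun w : S × T × U => w.2.2) hω
  have sum_eq : ∑ w, a w * b w / c w = ∑ w, p w :=
    (sum_measureReal_mul_div_eq_univ hX hY hZ).trans
      (sum_measureReal_preimage_singleton_eq_univ hXYZ).symm
  have gibbs := sum_mul_log_add_sum_mul_log_le (s := Finset.univ)
    (fun w _ => measureReal_nonneg) (fun w _ => p_le_a w) (fun w _ => p_le_b w)
    (fun w _ => p_le_c w) sum_eq.le
  linarith

end FiniteValued

theorem mutualInfo_le_of_factorsThrough {Ω : Type*} [MeasurableSpace Ω] {μ : Measure Ω}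
    [IsFiniteMeasure μ] {S T U : Type*} [Fintype S] [Fintype T] [Fintype U]
    [MeasurableSpace S] [MeasurableSingletonClass S]
    [MeasurableSpace T] [MeasurableSingletonClass T]
    {X : Ω → S} {Y : Ω → T} {Z : Ω → U} (hX : Measurable X) (hY : Measurable Y)
    (hZX : Z.FactorsThrough X) : mutualInfo μ Z Y ≤ mutualInfo μ X Y := by
  let _ : MeasurableSpace U := ⊤
  have hZ : Measurable Z := measurable_of_factorsThrough hX hZX
  have entropy_XYZ : shannonEntropy μ (fun ω => (X ω, Y ω, Z ω)) =
      shannonEntropy μ (fun ω => (X ω, Y ω)) :=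
    shannonEntropy_congr (hX.prodMk (hY.prodMk hZ)) (hX.prodMk hY) fun ω ω' => by
      grind [Function.FactorsThrough]
  have entropy_XZ : shannonEntropy μ (fun ω => (X ω, Z ω)) = shannonEntropy μ X :=
    shannonEntropy_congr (hX.prodMk hZ) hX fun ω ω' => by grind [Function.FactorsThrough]
  have entropy_YZ : shannonEntropy μ (fun ω => (Y ω, Z ω)) =
      shannonEntropy μ (fun ω => (Z ω, Y ω)) :=
    shannonEntropy_congr (hY.prodMk hZ) (hZ.prodMk hY) fun ω ω' => by grind
  have submodular := shannonEntropy_submodular (μ := μ) hX hY hZ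
  unfold mutualInfo
  linarith

theorem anchorView_mutualInfo_ge_augmented_of_encoder_general
    {Ω : Type*} [MeasurableSpace Ω] {μ : Measure Ω} [IsFiniteMeasure μ]
    {S Sstar T U V W : Type*}
    [Fintype Sstar] [Fintype T] [Fintype U] [Fintype V] [Fintype W]
    [MeasurableSpace S]
    [MeasurableSpace Sstar] [MeasurableSingletonClass Sstar]
    [MeasurableSpace T] [MeasurableSingletonClass T]
    [MeasurableSpace V] [MeasurableSingletonClass V]
    {G : Ω → S} (hG : Measurable G) {Gstar : Ω → Sstar} (hGstar : Measurable Gstar)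
    {Y : Ω → T} (hY : Measurable Y) {t : S → U}
    {fstar : S → V} (hfstar : Measurable fstar) (htf : t.FactorsThrough fstar) {fstar' : Sstar → W}
    (hEnc : mutualInfo μ (fstar ∘ G) Y ≤ mutualInfo μ (fstar' ∘ Gstar) Y) :
    mutualInfo μ (t ∘ G) Y ≤ mutualInfo μ Gstar Y := by
  calc mutualInfo μ (t ∘ G) Y
      ≤ mutualInfo μ (fstar ∘ G) Y :=
      mutualInfo_le_of_factorsThrough (hfstar.comp hG) hY fun _ _ h => htf h
    _ ≤ mutualInfo μ (fstar' ∘ Gstar) Y := hEnc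
    _ ≤ mutualInfo μ Gstar Y :=
      mutualInfo_le_of_factorsThrough hGstar hY (Function.FactorsThrough.rfl.comp_left fstar')

/-- Full chain of the paper's proof of Theorem 4.2: with injective measurable encoders
`f*` and `f*'`, if the encoded anchor view carries the same label-relevant information as the
encoded input graph, `I[f*' ∘ G* ; Y] = I[f* ∘ G ; Y]`, then for any data augmentation `t`,
`I[G* ; Y] ≥ I[t ∘ G ; Y]`. -/
theorem anchorView_mutualInfo_ge_augmented_of_encoder
    {Ω : Type*} [MeasurableSpace Ω] (μ : Measure Ω) [IsProbabilityMeasure μ]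
    {S Sstar T U V : Type*} [Fintype S] [Fintype Sstar] [Fintype T] [Fintype U] [Fintype V]
    [MeasurableSpace S] [MeasurableSingletonClass S]
    [MeasurableSpace Sstar] [MeasurableSingletonClass Sstar]
    [MeasurableSpace T] [MeasurableSingletonClass T]
    [MeasurableSpace U] [MeasurableSingletonClass U]
    [MeasurableSpace V] [MeasurableSingletonClass V]
    (G : Ω → S) (hG : Measurable G) (Gstar : Ω → Sstar) (hGstar : Measurable Gstar)
    (Y : Ω → T) (hY : Measurable Y)
    (t : S → U) (ht : Measurable t)
    (fstar : S → V) (hfstar : Measurable fstar) (hfstar_inj : Function.Injective fstar)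
    (fstar' : Sstar → V) (hfstar' : Measurable fstar')
    (hfstar'_inj : Function.Injective fstar')
    (hEnc : mutualInfo μ (fstar' ∘ Gstar) Y = mutualInfo μ (fstar ∘ G) Y) :
    mutualInfo μ (t ∘ G) Y ≤ mutualInfo μ Gstar Y :=
  anchorView_mutualInfo_ge_augmented_of_encoder_general hG hGstar hY hfstar
    (hfstar_inj.factorsThrough t) hEnc.ge
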